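/- arXiv:2405.16841 — 2 statements merged into one kernel-verified Lean document; each statement's English description precedes it below -/
import Mathlib

section
/- Let m ≥ 2, let σ₀ = ±1 if m is odd and σ₀ = (−1)^{m/2} if m is even, and fix k ∈ ℝ. Then there exist τ̄ > 0, a function λ : (0, τ̄) → ℂ, a function v : (0, τ̄) → ℂ^m, and a constant C > 0 such that for all τ ∈ (0, τ̄): L_τ v(τ) = λ(τ) v(τ), ‖v(τ) − r₀‖ ≤ Cτ, and |λ(τ) + σ₀ τ (ik)^m| ≤ Cτ², where r₀ ∈ ℂ^m is the vector with components (r₀)_j = (ik)^{j−1} for j = 1, …, m. -/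
/-- The m×m matrix with entry `s` in (1-indexed) position (1, m), the matrix `P` in
positions `A_{i+1,j} = P_{ij}` for `1 ≤ i, j ≤ m-1`, and all other entries zero. -/
noncomputable def embedA (m : ℕ) (s : ℝ) (P : Matrix (Fin (m-1)) (Fin (m-1)) ℝ) :
    Matrix (Fin m) (Fin m) ℝ := fun i j =>
  if hi : (i : ℕ) = 0 then (if (j : ℕ) = m - 1 then s else 0)
  else if hj : (j : ℕ) < m - 1 then
    P ⟨(i : ℕ) - 1, by have := i.isLt; omega⟩ ⟨(j : ℕ), hj⟩
  else 0

/-- The m×m matrix with entries `B_{i+1,j+1} = P_{ij}` (1-indexed) for `1 ≤ i, j ≤ m-1`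
and all other entries zero. -/
noncomputable def embedB (m : ℕ) (P : Matrix (Fin (m-1)) (Fin (m-1)) ℝ) :
    Matrix (Fin m) (Fin m) ℝ := fun i j =>
  if h : (i : ℕ) = 0 ∨ (j : ℕ) = 0 then 0
  else P ⟨(i : ℕ) - 1, by have := i.isLt; omega⟩ ⟨(j : ℕ) - 1, by have := j.isLt; omega⟩

/-- The (m-1)×(m-1) matrix `P*` with (1-indexed) entries `p_{ij} = 0` if `i + j ≠ m`,
and for `i + j = m`: `p_{ij} = σ₀ (-1)^(j-1)` if `j ≤ m/2`, `p_{ij} = σ₀ (-1)^(m-j)`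
if `j > m/2`. -/
noncomputable def Pstar (m : ℕ) (σ₀ : ℝ) : Matrix (Fin (m-1)) (Fin (m-1)) ℝ := fun i j =>
  if (i : ℕ) + (j : ℕ) + 2 = m then
    (if 2 * ((j : ℕ) + 1) ≤ m then σ₀ * (-1) ^ (j : ℕ)
     else σ₀ * (-1) ^ (m - ((j : ℕ) + 1)))
  else 0

/-- The m×m complex matrix `L_τ = -ik Ã_τ + B`, where `Ã_τ` has entry `τσ₀` in
(1-indexed) position (1, m) and `(Ã_τ)_{i+1,j} = P*_{ij}` for `1 ≤ i, j ≤ m-1`,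
and `B_{i+1,j+1} = P*_{ij}` with all other entries zero. -/
noncomputable def Lmat (m : ℕ) (σ₀ k τ : ℝ) : Matrix (Fin m) (Fin m) ℂ :=
  (-(Complex.I * (k : ℂ))) • (embedA m (τ * σ₀) (Pstar m σ₀)).map Complex.ofReal
    + (embedB m (Pstar m σ₀)).map Complex.ofReal

/-- The vector `r₀ ∈ ℂ^m` with components `(r₀)_j = (ik)^(j-1)`, `j = 1, …, m`. -/
noncomputable def r0 (m : ℕ) (k : ℝ) : Fin m → ℂ := fun j => (Complex.I * (k : ℂ)) ^ (j : ℕ)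

lemma fixpt_aux {E : Type*} [NormedAddCommGroup E] [NormedSpace ℝ E] [CompleteSpace E]
    (Q : E → E) (r : E) (hQ : ContDiff ℝ 1 Q) :
    ∃ τb : ℝ, 0 < τb ∧ ∃ M : ℝ, 0 < M ∧ ∀ τ ∈ Set.Ioo (0 : ℝ) τb,
      ∃ v : E, v = r + τ • Q v ∧ ‖v - r‖ ≤ M * τ := by
  obtain ⟨K, t, ht, hK⟩ := (hQ.contDiffAt (x := r)).exists_lipschitzOnWith
  obtain ⟨ρ, hρ, hball⟩ := Metric.nhds_basis_closedBall.mem_iff.1 ht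
  have hK0 : (0 : ℝ) ≤ K := K.2
  set M : ℝ := ‖Q r‖ + K * ρ + 1 with hM
  have hMpos : 0 < M := by positivity
  refine ⟨min (ρ / M) (1 / (K + 1)), by positivity, M, hMpos, ?_⟩
  rintro τ ⟨hτ, hτ2⟩
  have h1 : τ * M ≤ ρ := by
    have := (lt_of_lt_of_le hτ2 (min_le_left _ _)).le
    rwa [le_div_iff₀ hMpos] at this
  have h2 : τ * K < 1 := by
    have := (lt_of_lt_of_le hτ2 (min_le_right _ _))
    rw [lt_div_iff₀ (by positivity)] at this
    nlinarith
  have hbd : ∀ v ∈ Metric.closedBall r ρ, ‖Q v‖ ≤ M := by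
    intro v hv
    have h3 := hK.dist_le_mul v (hball hv) r (hball (Metric.mem_closedBall_self hρ.le))
    have h4 : dist v r ≤ ρ := hv
    rw [dist_eq_norm] at h3
    have h5 : ‖Q v‖ ≤ ‖Q v - Q r‖ + ‖Q r‖ := by
      simpa using norm_add_le (Q v - Q r) (Q r)
    have h6 : (K : ℝ) * dist v r ≤ K * ρ := mul_le_mul_of_nonneg_left h4 hK0
    linarith
  have hmaps : Set.MapsTo (fun v => r + τ • Q v) (Metric.closedBall r ρ)
      (Metric.closedBall r ρ) := by
    intro v hv
    simp only [Metric.mem_closedBall, dist_eq_norm, add_sub_cancel_left, norm_smul,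
      Real.norm_eq_abs, abs_of_pos hτ]
    exact (mul_le_mul_of_nonneg_left (hbd v hv) hτ.le).trans h1
  have hc : ContractingWith (⟨τ * K, by positivity⟩ : NNReal) (hmaps.restrict _ _ _) := by
    refine ⟨by exact_mod_cast h2, LipschitzWith.of_dist_le_mul ?_⟩
    rintro ⟨x, hx⟩ ⟨y, hy⟩
    have h3 := hK.dist_le_mul x (hball hx) y (hball hy)
    simp only [Subtype.dist_eq, Set.MapsTo.val_restrict_apply, dist_add_left, dist_smul₀,
      Real.norm_eq_abs, abs_of_pos hτ]
    change τ * dist (Q x) (Q y) ≤ (τ * K) * dist x y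
    rw [mul_assoc]
    exact mul_le_mul_of_nonneg_left h3 hτ.le
  obtain ⟨v, hv, hfix, -⟩ := hc.exists_fixedPoint' (Metric.isClosed_closedBall.isComplete)
    hmaps (Metric.mem_closedBall_self hρ.le) (edist_ne_top _ _)
  have hfix' : r + τ • Q v = v := hfix
  refine ⟨v, hfix'.symm, ?_⟩
  have : v - r = τ • Q v := by rw [sub_eq_iff_eq_add, add_comm, hfix']
  rw [this, norm_smul, Real.norm_eq_abs, abs_of_pos hτ, mul_comm]
  exact mul_le_mul_of_nonneg_right (hbd v hv) hτ.le

/-- Nonzero entry of `P*` in column `j` (0-indexed). -/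
noncomputable def pcol (m : ℕ) (σ₀ : ℝ) (j : ℕ) : ℝ :=
  if 2 * (j + 1) ≤ m then σ₀ * (-1) ^ j else σ₀ * (-1) ^ (m - (j + 1))

lemma pcol_sq (m : ℕ) (σ₀ : ℝ) (hσ : σ₀ * σ₀ = 1) (j : ℕ) :
    pcol m σ₀ j * pcol m σ₀ j = 1 := by
  unfold pcol
  split_ifs <;> rw [mul_mul_mul_comm, hσ, ← mul_pow] <;> norm_num

lemma Lmat_zero (m : ℕ) (hm : 2 ≤ m) (σ₀ k τ : ℝ) (v : Fin m → ℂ) :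
    (Lmat m σ₀ k τ).mulVec v ⟨0, by omega⟩ =
      -(Complex.I * k) * (τ * σ₀) * v ⟨m - 1, by omega⟩ := by
  rw [Matrix.mulVec, dotProduct, Finset.sum_eq_single ⟨m - 1, by omega⟩]
  · simp [Lmat, embedA, embedB]
  · intro j _ hj
    have : (j : ℕ) ≠ m - 1 := fun h => hj (Fin.ext h)
    simp [Lmat, embedA, embedB, this]
  · simp

lemma Lmat_succ (m : ℕ) (σ₀ k τ : ℝ) (v : Fin m → ℂ) (j : ℕ) (hj : j + 1 < m) :
    (Lmat m σ₀ k τ).mulVec v ⟨m - 1 - j, by omega⟩ =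
      pcol m σ₀ j * (v ⟨j + 1, hj⟩ - (Complex.I * k) * v ⟨j, by omega⟩) := by
  have hL : ∀ l : Fin m, Lmat m σ₀ k τ ⟨m - 1 - j, by omega⟩ l =
      (if l = ⟨j, by omega⟩ then -(Complex.I * k) * pcol m σ₀ j else 0) +
      (if l = ⟨j + 1, hj⟩ then (pcol m σ₀ j : ℂ) else 0) := by
    rintro ⟨l, hl⟩
    have e0 : m - 1 - j ≠ 0 := by omega
    have hA : embedA m (τ * σ₀) (Pstar m σ₀) ⟨m - 1 - j, by omega⟩ ⟨l, hl⟩ =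
        if l = j then pcol m σ₀ j else 0 := by
      unfold embedA Pstar pcol
      simp only [e0, dite_false]
      by_cases h : l = j
      · subst h
        have e1 : l < m - 1 := by omega
        have e2 : m - 1 - l - 1 + l + 2 = m := by omega
        simp only [e1, e2, dite_true, if_true]
      · have e2 : ¬ (m - 1 - j - 1 + l + 2 = m) := by omega
        simp [h, e2]
    have hB : embedB m (Pstar m σ₀) ⟨m - 1 - j, by omega⟩ ⟨l, hl⟩ =
        if l = j + 1 then pcol m σ₀ j else 0 := by
      unfold embedB Pstar pcol
      by_cases h : l = j + 1
      · subst h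
        have e2 : m - 1 - j - 1 + j + 2 = m := by omega
        simp [e0, e2]
      · by_cases h0 : l = 0
        · have : ¬ (0 = j + 1) := by omega
          simp [h0]
        · have e2 : ¬ (m - 1 - j - 1 + (l - 1) + 2 = m) := by omega
          simp [e0, h, h0, e2]
    simp only [Lmat, Matrix.add_apply, Matrix.smul_apply, Matrix.map_apply, hA, hB, Fin.mk.injEq,
      smul_eq_mul]
    split_ifs <;> simp
  rw [Matrix.mulVec, dotProduct]
  simp only [hL, add_mul, Finset.sum_add_distrib, ite_mul, zero_mul, Finset.sum_ite_eq',
    Finset.sum_ite_eq, Finset.mem_univ, if_true]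
  ring

/-- For small `τ > 0` the matrix `L_τ` has an eigenpair `(λ(τ), v(τ))`
with `‖v(τ) - r₀‖ ≤ Cτ` and `|λ(τ) + σ₀ τ (ik)^m| ≤ Cτ²`. -/
theorem stmt12 (m : ℕ) (hm : 2 ≤ m) (σ₀ : ℝ)
    (hσ : (Odd m ∧ (σ₀ = 1 ∨ σ₀ = -1)) ∨ (Even m ∧ σ₀ = (-1) ^ (m / 2)))
    (k : ℝ) :
    ∃ (τbar : ℝ), 0 < τbar ∧ ∃ (lam : ℝ → ℂ) (v : ℝ → (Fin m → ℂ)) (C : ℝ), 0 < C ∧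
      ∀ τ ∈ Set.Ioo (0 : ℝ) τbar,
        (Lmat m σ₀ k τ).mulVec (v τ) = lam τ • v τ ∧
        ‖v τ - r0 m k‖ ≤ C * τ ∧
        ‖lam τ + (σ₀ : ℂ) * (τ : ℂ) * (Complex.I * (k : ℂ)) ^ m‖ ≤ C * τ ^ 2 := by
  have hσ2 : σ₀ * σ₀ = 1 := by
    rcases hσ with ⟨_, h | h⟩ | ⟨_, h⟩
    · simp [h]
    · simp [h]
    · rw [h, ← mul_pow]; norm_num
  set a : ℂ := Complex.I * (k : ℂ) with ha
  let Q : (Fin m → ℂ) → (Fin m → ℂ) := fun v j =>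
    ∑ l ∈ Finset.range j, a ^ ((j : ℕ) - 1 - l) * (pcol m σ₀ l : ℂ) *
      (-a * σ₀ * v ⟨m - 1, by omega⟩) * v ⟨m - 1 - l, by omega⟩
  have hQ : ContDiff ℝ 1 Q := by
    rw [contDiff_pi]
    intro j
    apply ContDiff.sum
    intro l _
    fun_prop
  obtain ⟨τb, hτb, M, hM, H⟩ := fixpt_aux Q (r0 m k) hQ
  choose! v hv hvM using H
  refine ⟨τb, hτb, fun τ => -a * (τ * σ₀) * v τ ⟨m - 1, by omega⟩, v,
    M + ‖a‖ * |σ₀| * M, by positivity, ?_⟩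
  intro τ hτ
  have hτ0 : 0 < τ := hτ.1
  have h0 := hv τ hτ
  have hn := hvM τ hτ
  have hcomp : ∀ j : Fin m, v τ j = a ^ (j : ℕ) + τ * Q (v τ) j := by
    intro j
    have := congrFun h0 j
    simpa [r0, ← ha] using this
  refine ⟨?_, ?_, ?_⟩
  · funext ⟨i, hi⟩
    rcases Nat.eq_zero_or_pos i with rfl | hpos
    · rw [Lmat_zero m hm]
      have : v τ ⟨0, hi⟩ = 1 := by
        rw [hcomp]; simp [Q]
      simp [this, ← ha]
    · obtain ⟨j, hj, rfl⟩ : ∃ j, j + 1 < m ∧ i = m - 1 - j := ⟨m - 1 - i, by omega, by omega⟩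
      rw [Lmat_succ m σ₀ k τ (v τ) j hj]
      have hQs : Q (v τ) ⟨j + 1, hj⟩ = a * Q (v τ) ⟨j, by omega⟩ + (pcol m σ₀ j : ℂ) *
          (-a * σ₀ * v τ ⟨m - 1, by omega⟩) * v τ ⟨m - 1 - j, hi⟩ := by
        simp only [Q]
        rw [Finset.sum_range_succ, Finset.mul_sum]
        congr 1
        · apply Finset.sum_congr rfl
          intro l hl
          have hl' := Finset.mem_range.1 hl
          have : j + 1 - 1 - l = (j - 1 - l) + 1 := by omega
          rw [this, pow_succ]
          ring
        · simp
      have hp : (pcol m σ₀ j : ℂ) * (pcol m σ₀ j : ℂ) = 1 := by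
        exact_mod_cast pcol_sq m σ₀ hσ2 j
      have e : v τ ⟨j + 1, hj⟩ - a * v τ ⟨j, by omega⟩ = τ * ((pcol m σ₀ j : ℂ) *
          (-a * σ₀ * v τ ⟨m - 1, by omega⟩) * v τ ⟨m - 1 - j, hi⟩) := by
        rw [hcomp ⟨j + 1, hj⟩, hcomp ⟨j, by omega⟩, hQs, pow_succ]
        ring
      rw [e]
      simp only [Pi.smul_apply, smul_eq_mul]
      linear_combination (τ * (-a * σ₀ * v τ ⟨m - 1, by omega⟩) * v τ ⟨m - 1 - j, hi⟩) * hp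
  · refine hn.trans ?_
    have : 0 ≤ ‖a‖ * |σ₀| * M * τ := by positivity
    linarith
  · have e : -a * (τ * σ₀) * v τ ⟨m - 1, by omega⟩ + (σ₀ : ℂ) * (τ : ℂ) * a ^ m =
        -a * (τ * σ₀) * (v τ - r0 m k) ⟨m - 1, by omega⟩ := by
      have hpow : a ^ m = a * a ^ (m - 1) := by
        rw [← pow_succ']; congr 1; omega
      simp only [Pi.sub_apply, r0, ← ha]
      rw [hpow]
      ring
    rw [e]
    have h3 := (norm_le_pi_norm (v τ - r0 m k) ⟨m - 1, by omega⟩).trans hn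
    rw [norm_mul, norm_mul, norm_mul, norm_neg, Complex.norm_real, Complex.norm_real,
      Real.norm_eq_abs, Real.norm_eq_abs, abs_of_pos hτ0]
    calc ‖a‖ * (τ * |σ₀|) * ‖(v τ - r0 m k) ⟨m - 1, by omega⟩‖
        ≤ ‖a‖ * (τ * |σ₀|) * (M * τ) := by gcongr
      _ ≤ (M + ‖a‖ * |σ₀| * M) * τ ^ 2 := by nlinarith [mul_pos hM (pow_pos hτ0 2)]
end

section
/- Let τ > 0 and let k ∈ ℝ satisfy 4k²τ ≤ 1/2. Then the root ω₊(k) = (i/(2τ))(−1 + √(1 − 4k²τ)) of the equation τω² + iω − k² = 0 satisfies |ω₊(k) + ik²| ≤ 2τk⁴. In particular, ω₊(k) approximates the dispersion relation ω = −ik² of the heat equation ∂ₜu = ∂ₓ²u with error O(τk⁴). -/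
/-- For `τ > 0` and `4k²τ ≤ 1/2`, the root
`ω₊ = (i/(2τ))(-1 + √(1 - 4k²τ))` of `τω² + iω - k² = 0` satisfies
`|ω₊ + ik²| ≤ 2τk⁴`. -/
theorem stmt15 (τ : ℝ) (hτ : 0 < τ) (k : ℝ) (hk : 4 * k ^ 2 * τ ≤ 1 / 2) :
    (τ : ℂ) * (Complex.I / (2 * (τ : ℂ)) *
        (-1 + (Real.sqrt (1 - 4 * k ^ 2 * τ) : ℂ))) ^ 2 +
      Complex.I * (Complex.I / (2 * (τ : ℂ)) *
        (-1 + (Real.sqrt (1 - 4 * k ^ 2 * τ) : ℂ))) - (k : ℂ) ^ 2 = 0 ∧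
    norm (Complex.I / (2 * (τ : ℂ)) *
        (-1 + (Real.sqrt (1 - 4 * k ^ 2 * τ) : ℂ)) + Complex.I * (k : ℂ) ^ 2)
      ≤ 2 * τ * k ^ 4 := by
  obtain ⟨s, hs⟩ : ∃ s, s = Real.sqrt (1 - 4 * k ^ 2 * τ) := ⟨_, rfl⟩
  have h0 : 0 ≤ s := hs ▸ Real.sqrt_nonneg _
  have h2 : s ^ 2 = 1 - 4 * k ^ 2 * τ := by
    rw [hs]; exact Real.sq_sqrt (by linarith)
  rw [← hs]
  have hτ0 : τ ≠ 0 := hτ.ne'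
  have hτc : (τ : ℂ) ≠ 0 := by exact_mod_cast hτ0
  have h2c : (s : ℂ) ^ 2 = 1 - 4 * (k : ℂ) ^ 2 * τ := by exact_mod_cast h2
  have hkk : k ^ 2 = (1 - s ^ 2) / (4 * τ) := by
    rw [h2]; field_simp; ring
  have hkc : (k : ℂ) ^ 2 = (1 - (s : ℂ) ^ 2) / (4 * τ) := by
    rw [h2c]; field_simp; ring
  constructor
  · rw [hkc, mul_pow, div_pow, Complex.I_sq, ← mul_assoc Complex.I, ← mul_div_assoc Complex.I,
      Complex.I_mul_I]
    field_simp
    ring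
  · have e : Complex.I / (2 * (τ : ℂ)) * (-1 + (s : ℂ)) + Complex.I * (k : ℂ) ^ 2
        = Complex.I * ((-((1 - s) ^ 2 / (4 * τ)) : ℝ) : ℂ) := by
      rw [hkc]; push_cast; field_simp; ring
    rw [e, norm_mul, Complex.norm_I, one_mul, Complex.norm_real, norm_neg, Real.norm_eq_abs,
      abs_of_nonneg (by positivity)]
    have e2 : 2 * τ * k ^ 4 = ((1 - s) ^ 2 / (4 * τ)) * ((1 + s) ^ 2 / 2) := by
      rw [show k ^ 4 = (k ^ 2) ^ 2 by ring, hkk]; field_simp; ring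
    rw [e2]
    have hs2 : 1 / 2 ≤ s := by nlinarith
    exact le_mul_of_one_le_right (by positivity) (by nlinarith)
end
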